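/- Let z be a real number with 0 < z < 1 and let a, b, d be complex numbers such that 2a+1 and d are not nonpositive integers or zero, a+1/2 and a+3/2 are not nonpositive integers or zero, and Re(2a+1 + d − a − b − (d+1)) > 0 so that all series below converge. Then (1+z)^{−b} · Σ_{k=0}^∞ (a)_k (b)_k (d+1)_k (2z/(1+z))^k / ((2a+1)_k (d)_k k!) = Σ_{k=0}^∞ (b/2)_k ((b+1)/2)_k z^{2k} / ((a+1/2)_k k!) − ((1 − 2a/d) b /(2a+1)) · z · Σ_{k=0}^∞ ((b+1)/2)_k (b/2+1)_k z^{2k} / ((a+3/2)_k k!). -/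

import Mathlib

/-!
Writing `(d+1)_k / (d)_k = 1 + k / d` turns the three-two series into a combination of
`F = ₂F₁ a b (2a+1) w` and `G = ₂F₁ (a+1) (b+1) (2a+2) w`, where `w = 2z / (1+z)`. Both are
evaluated by Gauss's quadratic transformation. Its form without singularity at `a = 0` is
`(1+z)^(-b) (F + F⁺) = 2 ₂F₁ (b/2) ((b+1)/2) (a+1/2) (z²)`, with `F⁺ = ₂F₁ (a+1) b (2a+1) w`;
contiguous relations give `F⁺ - F` as a multiple of `w G`, and the classical form, which
evaluates `G`.

To prove it, expand `(1+z)^(-b) (F + F⁺)` in powers of `z`. By Euler's series transformation the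
coefficients are the moments at `X + 1` of the linear functional `X ^ k ↦ 2 (-2)^k (a)_k / (2a)_k`.
This functional kills `2a (X+1) p + X (X+2) p'` for all `p`, which for `p = (X+1)^(n+1)` is a
two-term recurrence between moments at distance two; so the odd ones vanish and the even ones are
explicit. The rearrangement is absolutely convergent only near `z = 0`, and the identity extends by
analytic continuation to the disc `2 ‖z‖ < ‖1 + z‖`, that is, `‖w‖ < 1`.
-/

/-- The Pochhammer symbol `(a)_k = a (a+1) ⋯ (a+k-1)`. -/
noncomputable def poch (a : ℂ) (k : ℕ) : ℂ := Polynomial.eval a (ascPochhammer ℂ k)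

open Polynomial Finset

section Pochhammer

theorem ascPochhammer_succ_eval_left {S : Type*} [CommSemiring S] (n : ℕ) (x : S) :
    (ascPochhammer S (n + 1)).eval x = x * (ascPochhammer S n).eval (x + 1) := by
  simp [ascPochhammer_succ_left]

theorem mul_ascPochhammer_eval_add_one {S : Type*} [CommSemiring S] (n : ℕ) (x : S) :
    x * (ascPochhammer S n).eval (x + 1) = (ascPochhammer S n).eval x * (x + n) := by
  rw [← ascPochhammer_succ_eval_left, ascPochhammer_succ_eval]

theorem ascPochhammer_add_eval {S : Type*} [CommSemiring S] (n m : ℕ) (x : S) :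
    (ascPochhammer S (n + m)).eval x =
      (ascPochhammer S n).eval x * (ascPochhammer S m).eval (x + n) := by
  simp [← ascPochhammer_mul]

theorem ascPochhammer_eval_ne_zero {R : Type*} [Ring R] [IsDomain R] {x : R}
    (hx : ∀ n : ℕ, x ≠ -n) (n : ℕ) : (ascPochhammer R n).eval x ≠ 0 := by
  rw [Ne, ascPochhammer_eval_eq_zero_iff]
  rintro ⟨k, -, hk⟩
  exact hx k (by rw [hk, neg_neg])

theorem ascPochhammer_eval_duplication {K : Type*} [Field K] [CharZero K] (x : K) (n : ℕ) :
    (ascPochhammer K (2 * n)).eval x =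
      4 ^ n * (ascPochhammer K n).eval (x / 2) * (ascPochhammer K n).eval ((x + 1) / 2) := by
  induction n with
  | zero => simp
  | succ n ih =>
    rw [show 2 * (n + 1) = 2 * n + 1 + 1 by ring]
    simp only [ascPochhammer_succ_eval, ih]
    push_cast
    field

end Pochhammer

section Hypergeometric

variable {𝕂 : Type*} [RCLike 𝕂]

theorem one_le_radius_ordinaryHypergeometricSeries (a b c : 𝕂) :
    1 ≤ (ordinaryHypergeometricSeries 𝕂 a b c).radius := by
  by_cases h : ∀ k : ℕ, (k : 𝕂) ≠ -a ∧ (k : 𝕂) ≠ -b ∧ (k : 𝕂) ≠ -c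
  · exact (ordinaryHypergeometricSeries_radius_eq_one 𝕂 a b c h).ge
  · simp only [← neg_eq_iff_eq_neg, ne_eq, not_forall, not_and_or, not_not] at h
    obtain ⟨k, rfl | rfl | rfl⟩ := h
    · simp [ordinaryHypergeometric_radius_top_of_neg_nat₁]
    · simp [ordinaryHypergeometric_radius_top_of_neg_nat₂]
    · simp [ordinaryHypergeometric_radius_top_of_neg_nat₃]

theorem mem_eball_radius_ordinaryHypergeometricSeries (a b c : 𝕂) {x : 𝕂} (hx : ‖x‖ < 1) :
    x ∈ Metric.eball 0 (ordinaryHypergeometricSeries 𝕂 a b c).radius :=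
  Metric.eball_subset_eball (one_le_radius_ordinaryHypergeometricSeries a b c)
    (by simpa [← ENNReal.ofReal_one, Metric.eball_ofReal] using hx)

theorem hasSum_ordinaryHypergeometric (a b c : 𝕂) {x : 𝕂} (hx : ‖x‖ < 1) :
    HasSum (fun n => ordinaryHypergeometricCoefficient a b c n * x ^ n) (₂F₁ a b c x) := by
  convert! (ordinaryHypergeometricSeries 𝕂 a b c).hasSum
    (mem_eball_radius_ordinaryHypergeometricSeries a b c hx) using 2 with n
  rw [ordinaryHypergeometricSeries_apply_eq, smul_eq_mul]

theorem analyticAt_ordinaryHypergeometric_comp (a b c : 𝕂) {f : 𝕂 → 𝕂} {x : 𝕂}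
    (hf : AnalyticAt 𝕂 f x) (hfx : ‖f x‖ < 1) : AnalyticAt 𝕂 (fun y => ₂F₁ a b c (f y)) x :=
  ((ordinaryHypergeometricSeries 𝕂 a b c).hasFPowerSeriesOnBall
    (one_pos.trans_le (one_le_radius_ordinaryHypergeometricSeries a b c))).analyticAt_of_mem
      (mem_eball_radius_ordinaryHypergeometricSeries a b c hfx) |>.comp hf

theorem exists_norm_ordinaryHypergeometricCoefficient_le (a b c : 𝕂) {ρ : ℝ} (hρ : 1 < ρ) :
    ∃ M, ∀ n, ‖ordinaryHypergeometricCoefficient a b c n‖ ≤ M * ρ ^ n := by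
  have hρ0 : 0 < ρ := one_pos.trans hρ
  have hnorm : ‖((ρ⁻¹ : ℝ) : 𝕂)‖ = ρ⁻¹ := by rw [RCLike.norm_ofReal, abs_of_pos (inv_pos.2 hρ0)]
  have hs := (hasSum_ordinaryHypergeometric a b c
    (hnorm.trans_lt (inv_lt_one_of_one_lt₀ hρ))).summable.norm
  refine ⟨∑' n, ‖ordinaryHypergeometricCoefficient a b c n * ((ρ⁻¹ : ℝ) : 𝕂) ^ n‖, fun n => ?_⟩
  have h := hs.le_tsum n fun _ _ => norm_nonneg _
  rwa [norm_mul, norm_pow, hnorm, inv_pow, ← div_eq_mul_inv, div_le_iff₀ (by positivity)] at h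

theorem hasSum_mul_pow_of_succ {f : ℕ → 𝕂} {x s : 𝕂} (h0 : f 0 = 0)
    (h : HasSum (fun n => f (n + 1) * x ^ n) s) : HasSum (fun n => f n * x ^ n) (x * s) := by
  rw [← hasSum_nat_add_iff' 1]
  simpa [h0, pow_succ', mul_left_comm] using h.mul_left x

theorem succ_mul_ordinaryHypergeometricCoefficient_succ (a b c : 𝕂) (n : ℕ) :
    ((n + 1 : ℕ) : 𝕂) * ordinaryHypergeometricCoefficient a b c (n + 1) =
      a * b / c * ordinaryHypergeometricCoefficient (a + 1) (b + 1) (c + 1) n := by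
  have hn : ((n + 1 : ℕ) : 𝕂) ≠ 0 := Nat.cast_ne_zero.2 n.succ_ne_zero
  simp only [ordinaryHypergeometricCoefficient, ascPochhammer_succ_eval_left, Nat.factorial_succ,
    Nat.cast_mul, mul_inv]
  field

theorem ordinaryHypergeometricCoefficient_add_one_left_succ (a b c : 𝕂) (n : ℕ) :
    ordinaryHypergeometricCoefficient (a + 1) b c (n + 1) =
      ordinaryHypergeometricCoefficient a b c (n + 1) +
        b / c * ordinaryHypergeometricCoefficient (a + 1) (b + 1) (c + 1) n := by
  have hn : (n + 1 : 𝕂) ≠ 0 := n.cast_add_one_ne_zero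
  simp only [ordinaryHypergeometricCoefficient, ascPochhammer_succ_eval n (a + 1),
    ascPochhammer_succ_eval_left, Nat.factorial_succ, Nat.cast_mul, Nat.cast_succ, mul_inv]
  field

theorem ordinaryHypergeometricCoefficient_add_one_right (a b : 𝕂) {c : 𝕂}
    (hc : ∀ n : ℕ, c ≠ -n) (n : ℕ) :
    (c - a) * ordinaryHypergeometricCoefficient a b (c + 1) n +
        a * ordinaryHypergeometricCoefficient (a + 1) b (c + 1) n =
      c * ordinaryHypergeometricCoefficient a b c n := by
  have hcn : (ascPochhammer 𝕂 n).eval c ≠ 0 := ascPochhammer_eval_ne_zero hc n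
  have hcn' : (ascPochhammer 𝕂 n).eval (c + 1) ≠ 0 :=
    ascPochhammer_eval_ne_zero (fun k h => hc (k + 1) (by push_cast; linear_combination h)) n
  have ha := mul_ascPochhammer_eval_add_one n a
  have hc' := mul_ascPochhammer_eval_add_one n c
  simp only [ordinaryHypergeometricCoefficient]
  field_simp
  linear_combination (ascPochhammer 𝕂 n).eval b * (n.factorial : 𝕂)⁻¹ *
    ((ascPochhammer 𝕂 n).eval c * ha - (ascPochhammer 𝕂 n).eval a * hc')

theorem hasSum_natCast_mul_ordinaryHypergeometricCoefficient (a b c : 𝕂) {x : 𝕂}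
    (hx : ‖x‖ < 1) :
    HasSum (fun n => n * ordinaryHypergeometricCoefficient a b c n * x ^ n)
      (a * b / c * (x * ₂F₁ (a + 1) (b + 1) (c + 1) x)) := by
  rw [mul_left_comm]
  refine hasSum_mul_pow_of_succ (by simp) ?_
  simp_rw [succ_mul_ordinaryHypergeometricCoefficient_succ, mul_assoc (a * b / c)]
  exact (hasSum_ordinaryHypergeometric (a + 1) (b + 1) (c + 1) hx).mul_left (a * b / c)

theorem ordinaryHypergeometric_add_one_left (a b c : 𝕂) {x : 𝕂} (hx : ‖x‖ < 1) :
    ₂F₁ (a + 1) b c x = ₂F₁ a b c x + b / c * (x * ₂F₁ (a + 1) (b + 1) (c + 1) x) := by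
  have hdiff : HasSum (fun n => (ordinaryHypergeometricCoefficient (a + 1) b c n -
      ordinaryHypergeometricCoefficient a b c n) * x ^ n) (₂F₁ (a + 1) b c x - ₂F₁ a b c x) := by
    simpa only [sub_mul] using (hasSum_ordinaryHypergeometric (a + 1) b c hx).sub
      (hasSum_ordinaryHypergeometric a b c hx)
  rw [← sub_eq_iff_eq_add', mul_left_comm]
  refine hdiff.unique (hasSum_mul_pow_of_succ
    (by simp [ordinaryHypergeometricCoefficient]) ?_)
  convert! (hasSum_ordinaryHypergeometric (a + 1) (b + 1) (c + 1) hx).mul_left (b / c)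
    using 2 with n
  rw [ordinaryHypergeometricCoefficient_add_one_left_succ]
  ring

theorem ordinaryHypergeometric_add_one_right (a b : 𝕂) {c x : 𝕂} (hc : ∀ n : ℕ, c ≠ -n)
    (hx : ‖x‖ < 1) :
    (c - a) * ₂F₁ a b (c + 1) x + a * ₂F₁ (a + 1) b (c + 1) x = c * ₂F₁ a b c x := by
  refine (((hasSum_ordinaryHypergeometric a b (c + 1) hx).mul_left (c - a)).add
    ((hasSum_ordinaryHypergeometric (a + 1) b (c + 1) hx).mul_left a)).unique ?_
  convert! (hasSum_ordinaryHypergeometric a b c hx).mul_left c using 2 with n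
  rw [← mul_assoc c, ← ordinaryHypergeometricCoefficient_add_one_right a b hc]
  ring

theorem hasSum_three_two_hypergeometric_add_one (a b c : 𝕂) {d x : 𝕂} (hd : ∀ n : ℕ, d ≠ -n)
    (hx : ‖x‖ < 1) :
    HasSum (fun n => (ascPochhammer 𝕂 n).eval a * (ascPochhammer 𝕂 n).eval b *
        (ascPochhammer 𝕂 n).eval (d + 1) * x ^ n /
        ((ascPochhammer 𝕂 n).eval c * (ascPochhammer 𝕂 n).eval d * (n.factorial : 𝕂)))
      (₂F₁ a b c x + a * b / c / d * (x * ₂F₁ (a + 1) (b + 1) (c + 1) x)) := by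
  have hsum := (hasSum_ordinaryHypergeometric a b c hx).add
    ((hasSum_natCast_mul_ordinaryHypergeometricCoefficient a b c hx).mul_left d⁻¹)
  convert! hsum using 1
  · funext n
    have hd0 : d ≠ 0 := by simpa using hd 0
    have hdn : (ascPochhammer 𝕂 n).eval d ≠ 0 := ascPochhammer_eval_ne_zero hd n
    have hratio : (ascPochhammer 𝕂 n).eval (d + 1) / (ascPochhammer 𝕂 n).eval d = 1 + d⁻¹ * n := by
      have := mul_ascPochhammer_eval_add_one n d
      field_simp
      linear_combination this
    simp only [ordinaryHypergeometricCoefficient]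
    linear_combination (ascPochhammer 𝕂 n).eval a * (ascPochhammer 𝕂 n).eval b * x ^ n /
      ((ascPochhammer 𝕂 n).eval c * n.factorial) * hratio
  · field

end Hypergeometric

section Moments

/-- The linear functional on polynomials with moment sequence `u`, that is, `X ^ k ↦ u k`. It turns
the binomial transform of `u` into the moments of `X + 1`. -/
noncomputable def momentFunctional {R : Type*} [CommSemiring R] (u : ℕ → R) : R[X] →ₗ[R] R :=
  Polynomial.lsum fun k => LinearMap.toSpanSingleton R R (u k)

theorem momentFunctional_X_pow {R : Type*} [CommSemiring R] (u : ℕ → R) (k : ℕ) :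
    momentFunctional u (X ^ k) = u k := by
  simp [momentFunctional, ← monomial_one_right_eq_X_pow]

theorem momentFunctional_X_add_one_pow {R : Type*} [CommSemiring R] (u : ℕ → R) (n : ℕ) :
    momentFunctional u ((X + 1) ^ n) = ∑ p ∈ antidiagonal n, n.choose p.1 * u p.1 := by
  simp only [(Commute.all X (1 : R[X])).add_pow', one_pow, mul_one, map_sum, map_nsmul,
    momentFunctional_X_pow]
  simp only [nsmul_eq_mul]

theorem momentFunctional_add_derivative_eq_zero {R : Type*} [CommRing R] {α : R} {u : ℕ → R}
    (hu : ∀ k : ℕ, (2 * α + k) * u (k + 1) = -2 * (α + k) * u k) (p : R[X]) :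
    momentFunctional u (C (2 * α) * (X + 1) * p + X * (X + 2) * derivative p) = 0 := by
  induction p using Polynomial.induction_on' with
  | add p q hp hq =>
    simp only [map_add, mul_add] at hp hq ⊢
    linear_combination hp + hq
  | monomial k r =>
    have hX : C (2 * α) * (X + 1) * monomial k r + X * (X + 2) * derivative (monomial k r) =
        (r * (2 * α + k)) • X ^ (k + 1) + (r * (2 * (α + k))) • (X ^ k : R[X]) := by
      rw [← C_mul_X_pow_eq_monomial, derivative_C_mul_X_pow]
      cases k <;> simp [smul_eq_C_mul, C_ofNat] <;> ring
    simp only [hX, map_add, map_smul, momentFunctional_X_pow, smul_eq_mul]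
    linear_combination r * hu k

theorem momentFunctional_X_add_one_pow_add_two {R : Type*} [CommRing R] {α : R} {u : ℕ → R}
    (hu : ∀ k : ℕ, (2 * α + k) * u (k + 1) = -2 * (α + k) * u k) (n : ℕ) :
    (2 * α + n + 1) * momentFunctional u ((X + 1) ^ (n + 2)) =
      (n + 1) * momentFunctional u ((X + 1) ^ n) := by
  have h := momentFunctional_add_derivative_eq_zero hu ((X + 1) ^ (n + 1))
  have hX : C (2 * α) * (X + 1) * (X + 1) ^ (n + 1) +
        X * (X + 2) * derivative ((X + 1 : R[X]) ^ (n + 1)) =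
      (2 * α + n + 1) • (X + 1) ^ (n + 2) - (n + 1 : R) • (X + 1) ^ n := by
    simp only [derivative_pow_succ, derivative_X, derivative_one, smul_eq_C_mul, map_add,
      map_mul, map_natCast, map_one, C_ofNat]
    ring
  rw [hX, map_sub, map_smul, map_smul, smul_eq_mul, smul_eq_mul] at h
  exact sub_eq_zero.1 h

variable {K : Type*} [Field K] {α : K} {u : ℕ → K}

theorem momentFunctional_X_add_one_pow_odd (hα : ∀ n : ℕ, 2 * α + 1 ≠ -n)
    (hu : ∀ k : ℕ, (2 * α + k) * u (k + 1) = -2 * (α + k) * u k) (hu1 : u 1 = -u 0) (m : ℕ) :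
    momentFunctional u ((X + 1) ^ (2 * m + 1)) = 0 := by
  induction m with
  | zero =>
    rw [momentFunctional_X_add_one_pow]
    simp [Nat.antidiagonal_succ, hu1]
  | succ m ih =>
    have h := momentFunctional_X_add_one_pow_add_two hu (2 * m + 1)
    rw [ih, mul_zero, mul_eq_zero] at h
    refine h.resolve_left fun h0 => hα (2 * m + 1) ?_
    push_cast at h0 ⊢
    linear_combination h0

theorem ascPochhammer_eval_mul_momentFunctional_X_add_one_pow_even [CharZero K]
    (hu : ∀ k : ℕ, (2 * α + k) * u (k + 1) = -2 * (α + k) * u k) (m : ℕ) :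
    (ascPochhammer K m).eval (α + 1 / 2) * momentFunctional u ((X + 1) ^ (2 * m)) =
      (ascPochhammer K m).eval (1 / 2) * u 0 := by
  induction m with
  | zero =>
    rw [momentFunctional_X_add_one_pow]
    simp
  | succ m ih =>
    have h := momentFunctional_X_add_one_pow_add_two hu (2 * m)
    rw [ascPochhammer_succ_eval, ascPochhammer_succ_eval, mul_add_one]
    push_cast at h
    linear_combination (ascPochhammer K m).eval (α + 1 / 2) / 2 * h + (m + 1 / 2) * ih

end Moments

section Euler

theorem summable_of_summable_sum_antidiagonal_norm {E : Type*} [NormedAddCommGroup E]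
    [CompleteSpace E] {f : ℕ × ℕ → E} (hf : Summable fun n => ∑ p ∈ antidiagonal n, ‖f p‖) :
    Summable f := by
  refine .of_norm ?_
  rw [← HasAntidiagonal.sigmaAntidiagonalEquivProd.summable_iff,
    summable_sigma_of_nonneg fun _ => by simp]
  refine ⟨fun n => (hasSum_fintype _).summable, ?_⟩
  simpa [tsum_fintype, sum_coe_sort _ fun p => ‖f p‖, -univ_eq_attach] using hf

theorem hasSum_sum_antidiagonal {E : Type*} [AddCommMonoid E] [TopologicalSpace E]
    [ContinuousAdd E] [RegularSpace E] {f : ℕ × ℕ → E} {s : E} (hf : HasSum f s) :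
    HasSum (fun n => ∑ p ∈ antidiagonal n, f p) s := by
  refine (HasAntidiagonal.sigmaAntidiagonalEquivProd.hasSum_iff.2 hf).sigma fun n => ?_
  exact sum_coe_sort (antidiagonal n) f ▸ hasSum_fintype _

theorem hasSum_one_sub_cpow_neg (b : ℂ) {x : ℂ} (hx : ‖x‖ < 1) :
    HasSum (fun n => (ascPochhammer ℂ n).eval b / n.factorial * x ^ n) ((1 - x) ^ (-b)) := by
  have h := (Complex.one_div_one_sub_cpow_hasFPowerSeriesOnBall_zero b).hasSum (y := x)
    (by simpa [← ENNReal.ofReal_one, Metric.eball_ofReal] using hx)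
  rw [zero_add, one_div, ← Complex.cpow_neg] at h
  convert! h using 2 with n
  have hchoose := Ring.factorial_nsmul_multichoose_eq_ascPochhammer b n
  rw [nsmul_eq_mul, ascPochhammer_smeval_eq_eval] at hchoose
  rw [FormalMultilinearSeries.ofScalars_apply_eq, Ring.choose,
    show b + n - 1 - n + 1 = b by ring, ← hchoose, smul_eq_mul,
    mul_div_cancel_left₀ _ (Nat.cast_ne_zero.2 n.factorial_ne_zero)]

/-- The terms of the double series obtained from `∑ k, (b)_k / k! * u k * (x / (1 - x)) ^ k`, up to
the factor `(1 - x) ^ (-b)`, by expanding in powers of `x`; its degree in `x` is `p.1 + p.2`. -/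
noncomputable def eulerTerm (b : ℂ) (u : ℕ → ℂ) (x : ℂ) (p : ℕ × ℕ) : ℂ :=
  (ascPochhammer ℂ (p.1 + p.2)).eval b / (p.1 + p.2).factorial *
    ((p.1 + p.2).choose p.1 * u p.1) * x ^ (p.1 + p.2)

theorem hasSum_eulerTerm_row (b : ℂ) (u : ℕ → ℂ) {x : ℂ} (hx : ‖x‖ < 1) (k : ℕ) :
    HasSum (fun j => eulerTerm b u x (k, j))
      ((1 - x) ^ (-b) *
        ((ascPochhammer ℂ k).eval b / k.factorial * u k * (x / (1 - x)) ^ k)) := by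
  have hx1 : 1 - x ≠ 0 := sub_ne_zero.2 fun h => by simp [← h] at hx
  convert! (hasSum_one_sub_cpow_neg (b + k) hx).mul_left
    ((ascPochhammer ℂ k).eval b / k.factorial * u k * x ^ k) using 1
  · funext j
    rw [eulerTerm, ascPochhammer_add_eval, Nat.cast_add_choose]
    field_simp [Nat.factorial_ne_zero]
    ring
  · rw [neg_add, ← sub_eq_add_neg, Complex.cpow_sub _ _ hx1, Complex.cpow_natCast, div_pow]
    ring

theorem sum_antidiagonal_eulerTerm (b : ℂ) (u : ℕ → ℂ) (x : ℂ) (n : ℕ) :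
    ∑ p ∈ antidiagonal n, eulerTerm b u x p =
      (ascPochhammer ℂ n).eval b / n.factorial * momentFunctional u ((X + 1) ^ n) * x ^ n := by
  rw [momentFunctional_X_add_one_pow, mul_sum, sum_mul]
  refine sum_congr rfl fun p hp => ?_
  rw [eulerTerm, mem_antidiagonal.1 hp]

variable {u : ℕ → ℂ} {M ρ : ℝ}

theorem sum_antidiagonal_norm_eulerTerm_le (hu : ∀ k, ‖u k‖ ≤ M * ρ ^ k) (b x : ℂ) (n : ℕ) :
    ∑ p ∈ antidiagonal n, ‖eulerTerm b u x p‖ ≤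
      M * (‖(ascPochhammer ℂ n).eval b / n.factorial‖ * (‖x‖ * (ρ + 1)) ^ n) := by
  calc ∑ p ∈ antidiagonal n, ‖eulerTerm b u x p‖
      ≤ ∑ p ∈ antidiagonal n, ‖(ascPochhammer ℂ n).eval b / n.factorial‖ *
          (n.choose p.1 * (M * ρ ^ p.1)) * ‖x‖ ^ n := by
        refine sum_le_sum fun p hp => ?_
        rw [eulerTerm, mem_antidiagonal.1 hp, norm_mul, norm_mul, norm_mul, norm_pow,
          Complex.norm_natCast]
        gcongr
        exact hu p.1
    _ = M * (‖(ascPochhammer ℂ n).eval b / n.factorial‖ * (‖x‖ * (ρ + 1)) ^ n) := by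
        rw [mul_pow, (Commute.all ρ 1).add_pow', ← sum_mul, ← mul_sum]
        simp only [mul_sum, sum_mul, nsmul_eq_mul, one_pow, mul_one]
        exact sum_congr rfl fun p _ => by ring

theorem summable_eulerTerm (hu : ∀ k, ‖u k‖ ≤ M * ρ ^ k) (hρ : 0 ≤ ρ) (b : ℂ) {x : ℂ}
    (hx : ‖x‖ * (ρ + 1) < 1) : Summable (eulerTerm b u x) := by
  have hnorm : ‖((‖x‖ * (ρ + 1) : ℝ) : ℂ)‖ = ‖x‖ * (ρ + 1) :=
    Complex.norm_of_nonneg (by positivity)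
  have hbinomial := (hasSum_one_sub_cpow_neg b (hnorm.trans_lt hx)).summable.norm
  simp only [norm_mul, norm_pow, hnorm] at hbinomial
  exact summable_of_summable_sum_antidiagonal_norm <| .of_nonneg_of_le (fun n => by positivity)
    (sum_antidiagonal_norm_eulerTerm_le hu b x) (hbinomial.mul_left M)

theorem hasSum_euler_transform (hu : ∀ k, ‖u k‖ ≤ M * ρ ^ k) (hρ : 0 ≤ ρ) (b : ℂ) {x : ℂ}
    (hx : ‖x‖ * (ρ + 1) < 1) :
    HasSum (fun n => (ascPochhammer ℂ n).eval b / n.factorial *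
        momentFunctional u ((X + 1) ^ n) * x ^ n)
      ((1 - x) ^ (-b) *
        ∑' k, (ascPochhammer ℂ k).eval b / k.factorial * u k * (x / (1 - x)) ^ k) := by
  have hx1 : ‖x‖ < 1 := (le_mul_of_one_le_right (norm_nonneg x) (by linarith)).trans_lt hx
  have hsum := (summable_eulerTerm hu hρ b hx).hasSum
  rw [← tsum_mul_left, (hsum.prod_fiberwise (hasSum_eulerTerm_row b u hx1)).tsum_eq]
  simpa only [sum_antidiagonal_eulerTerm] using hasSum_sum_antidiagonal hsum

end Euler

section Region

variable {z : ℂ}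

theorem setOf_two_mul_norm_lt_norm_one_add :
    {z : ℂ | 2 * ‖z‖ < ‖1 + z‖} = Metric.ball (1 / 3 : ℂ) (2 / 3) := by
  ext z
  rw [Set.mem_ofPred_eq, mem_ball_iff_norm, ← sq_lt_sq₀ (by positivity) (by positivity),
    ← sq_lt_sq₀ (norm_nonneg _) (by positivity), mul_pow, ← sub_pos, ← sub_pos (b := ‖_‖ ^ 2)]
  have hsq : ‖1 + z‖ ^ 2 - 2 ^ 2 * ‖z‖ ^ 2 = 3 * ((2 / 3) ^ 2 - ‖z - 1 / 3‖ ^ 2) := by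
    rw [show (1 / 3 : ℂ) = (1 / 3 : ℝ) by norm_num]
    simp only [← Complex.normSq_eq_norm_sq, Complex.normSq_apply, Complex.add_re, Complex.add_im,
      Complex.sub_re, Complex.sub_im, Complex.one_re, Complex.one_im, Complex.ofReal_re,
      Complex.ofReal_im]
    ring
  rw [hsq, mul_pos_iff_of_pos_left three_pos]

theorem isPreconnected_setOf_two_mul_norm_lt :
    IsPreconnected {z : ℂ | 2 * ‖z‖ < ‖1 + z‖} :=
  setOf_two_mul_norm_lt_norm_one_add ▸ (convex_ball _ _).isPreconnected

theorem norm_lt_one_of_two_mul_norm_lt (hz : 2 * ‖z‖ < ‖1 + z‖) : ‖z‖ < 1 := by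
  have h := norm_add_le 1 z
  rw [norm_one] at h
  linarith

theorem norm_two_mul_div_one_add_lt_one (hz : 2 * ‖z‖ < ‖1 + z‖) : ‖2 * z / (1 + z)‖ < 1 := by
  rw [norm_div, norm_mul, RCLike.norm_ofNat]
  exact (div_lt_one ((by positivity : 0 ≤ 2 * ‖z‖).trans_lt hz)).2 hz

theorem norm_sq_lt_one_of_two_mul_norm_lt (hz : 2 * ‖z‖ < ‖1 + z‖) : ‖z ^ 2‖ < 1 := by
  rw [norm_pow]
  exact pow_lt_one₀ (norm_nonneg z) (norm_lt_one_of_two_mul_norm_lt hz) two_ne_zero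

theorem one_add_mem_slitPlane_of_two_mul_norm_lt (hz : 2 * ‖z‖ < ‖1 + z‖) :
    1 + z ∈ Complex.slitPlane :=
  Complex.mem_slitPlane_of_norm_lt_one (norm_lt_one_of_two_mul_norm_lt hz)

end Region

section Gauss

/-- The moment sequence behind Gauss's quadratic transformation. It equals
`2 (-2) ^ k (a)_k / (2 a)_k`, written so as to be regular at `a = 0`. -/
noncomputable def gaussMoment {K : Type*} [Field K] (a : K) (k : ℕ) : K :=
  (-2) ^ k * (((ascPochhammer K k).eval a + (ascPochhammer K k).eval (a + 1)) /
    (ascPochhammer K k).eval (2 * a + 1))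

theorem gaussMoment_zero {K : Type*} [Field K] (a : K) : gaussMoment a 0 = 2 := by
  simp [gaussMoment, one_add_one_eq_two]

theorem two_mul_add_mul_gaussMoment_succ {K : Type*} [Field K] {a : K}
    (ha : ∀ n : ℕ, 2 * a + 1 ≠ -n) (k : ℕ) :
    (2 * a + k) * gaussMoment a (k + 1) = -2 * (a + k) * gaussMoment a k := by
  have hc : (ascPochhammer K k).eval (2 * a + 1) ≠ 0 := ascPochhammer_eval_ne_zero ha k
  have hck : 2 * a + 1 + k ≠ 0 := fun h => ha k (eq_neg_of_add_eq_zero_left h)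
  simp only [gaussMoment, ascPochhammer_succ_eval, pow_succ]
  field_simp
  linear_combination -2 * (-2) ^ k * mul_ascPochhammer_eval_add_one k a

theorem gaussMoment_one {K : Type*} [Field K] {a : K} (ha : 2 * a + 1 ≠ 0) :
    gaussMoment a 1 = -2 := by
  simp only [gaussMoment, ascPochhammer_one, eval_X, pow_one]
  field_simp
  ring

theorem ascPochhammer_div_factorial_mul_gaussMoment {K : Type*} [Field K] (a b : K) (k : ℕ) :
    (ascPochhammer K k).eval b / k.factorial * gaussMoment a k =
      (-2) ^ k * (ordinaryHypergeometricCoefficient a b (2 * a + 1) k +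
        ordinaryHypergeometricCoefficient (a + 1) b (2 * a + 1) k) := by
  simp only [gaussMoment, ordinaryHypergeometricCoefficient]
  ring

theorem exists_norm_gaussMoment_le (a : ℂ) : ∃ M, ∀ k, ‖gaussMoment a k‖ ≤ M * 4 ^ k := by
  obtain ⟨M, hM⟩ := exists_norm_ordinaryHypergeometricCoefficient_le a 1 (2 * a + 1) one_lt_two
  obtain ⟨N, hN⟩ :=
    exists_norm_ordinaryHypergeometricCoefficient_le (a + 1) 1 (2 * a + 1) one_lt_two
  refine ⟨M + N, fun k => ?_⟩
  have hk : (k.factorial : ℂ) ≠ 0 := Nat.cast_ne_zero.2 k.factorial_ne_zero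
  have h := ascPochhammer_div_factorial_mul_gaussMoment a 1 k
  rw [ascPochhammer_eval_one, div_self hk, one_mul] at h
  calc ‖gaussMoment a k‖
      ≤ 2 ^ k * (M * 2 ^ k + N * 2 ^ k) := by
        rw [h, norm_mul, norm_pow, norm_neg, RCLike.norm_ofNat]
        gcongr
        exact norm_add_le_of_le (hM k) (hN k)
    _ = (M + N) * 4 ^ k := by
        rw [show (4 : ℝ) = 2 * 2 by norm_num, mul_pow]
        ring

theorem hasSum_gaussMoment (a b : ℂ) {x : ℂ} (hx : ‖-2 * x‖ < 1) :
    HasSum (fun k => (ascPochhammer ℂ k).eval b / k.factorial * gaussMoment a k * x ^ k)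
      (₂F₁ a b (2 * a + 1) (-2 * x) + ₂F₁ (a + 1) b (2 * a + 1) (-2 * x)) := by
  convert! (hasSum_ordinaryHypergeometric a b (2 * a + 1) hx).add
    (hasSum_ordinaryHypergeometric (a + 1) b (2 * a + 1) hx) using 2 with k
  rw [ascPochhammer_div_factorial_mul_gaussMoment]
  ring

theorem ascPochhammer_eval_two_mul_div_factorial_mul {K : Type*} [Field K] [CharZero K]
    {b c L s : K} {m : ℕ} (hc : (ascPochhammer K m).eval c ≠ 0)
    (hL : (ascPochhammer K m).eval c * L = (ascPochhammer K m).eval (1 / 2) * s) :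
    (ascPochhammer K (2 * m)).eval b / (2 * m).factorial * L =
      s * ordinaryHypergeometricCoefficient (b / 2) ((b + 1) / 2) c m := by
  have hfac : ((2 * m).factorial : K) = 4 ^ m * (ascPochhammer K m).eval (1 / 2) * m.factorial := by
    rw [← ascPochhammer_eval_one, ascPochhammer_eval_duplication, one_add_one_eq_two,
      div_self two_ne_zero, ascPochhammer_eval_one]
  have hne : ((2 * m).factorial : K) ≠ 0 := Nat.cast_ne_zero.2 (2 * m).factorial_ne_zero
  rw [hfac] at hne ⊢
  rw [eq_div_of_mul_eq hc ((mul_comm _ _).trans hL), ascPochhammer_eval_duplication,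
    ordinaryHypergeometricCoefficient]
  have hhalf := right_ne_zero_of_mul (left_ne_zero_of_mul hne)
  field_simp

theorem hasSum_momentFunctional_mul_neg_pow {a b : ℂ} (ha : ∀ n : ℕ, 2 * a + 1 ≠ -n) {u : ℕ → ℂ}
    (hu : ∀ k : ℕ, (2 * a + k) * u (k + 1) = -2 * (a + k) * u k) (hu1 : u 1 = -u 0) {z : ℂ}
    (hz : ‖z‖ < 1) :
    HasSum (fun n => (ascPochhammer ℂ n).eval b / n.factorial *
        momentFunctional u ((X + 1) ^ n) * (-z) ^ n)
      (u 0 * ₂F₁ (b / 2) ((b + 1) / 2) (a + 1 / 2) (z ^ 2)) := by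
  have hc (m : ℕ) : (ascPochhammer ℂ m).eval (a + 1 / 2) ≠ 0 :=
    ascPochhammer_eval_ne_zero (fun n h => ha (2 * n) (by push_cast; linear_combination 2 * h)) m
  have hz2 : ‖z ^ 2‖ < 1 := by simpa using hz
  rw [← (mul_right_injective₀ two_ne_zero).hasSum_iff]
  · convert! (hasSum_ordinaryHypergeometric (b / 2) ((b + 1) / 2) (a + 1 / 2) hz2).mul_left (u 0)
      using 2 with m
    rw [Function.comp_apply, ascPochhammer_eval_two_mul_div_factorial_mul (hc m)
      (ascPochhammer_eval_mul_momentFunctional_X_add_one_pow_even hu m), pow_mul, neg_sq, mul_assoc]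
  · intro n hn
    obtain ⟨m, rfl⟩ : Odd n := by
      simpa [← Nat.not_even_iff_odd, even_iff_exists_two_mul, eq_comm] using hn
    rw [momentFunctional_X_add_one_pow_odd ha hu hu1, mul_zero, zero_mul]

theorem ordinaryHypergeometric_add_gauss_quadratic_of_norm_lt {a : ℂ}
    (ha : ∀ n : ℕ, 2 * a + 1 ≠ -n) (b : ℂ) {z : ℂ} (hz : ‖z‖ < 1 / 5) :
    (1 + z) ^ (-b) * (₂F₁ a b (2 * a + 1) (2 * z / (1 + z)) +
        ₂F₁ (a + 1) b (2 * a + 1) (2 * z / (1 + z))) =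
      2 * ₂F₁ (b / 2) ((b + 1) / 2) (a + 1 / 2) (z ^ 2) := by
  obtain ⟨M, hM⟩ := exists_norm_gaussMoment_le a
  have hregion : 2 * ‖z‖ < ‖1 + z‖ := by
    have := norm_sub_le (1 + z) z
    rw [add_sub_cancel_right, norm_one] at this
    linarith
  have hw : -2 * (-z / (1 - -z)) = 2 * z / (1 + z) := by ring
  have hseries := hasSum_gaussMoment a b (x := -z / (1 - -z))
    (by rw [hw]; exact norm_two_mul_div_one_add_lt_one hregion)
  have heuler := hasSum_euler_transform hM (by norm_num) b (x := -z)
    (by rw [norm_neg]; linarith)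
  rw [hseries.tsum_eq, hw, sub_neg_eq_add] at heuler
  have heven := hasSum_momentFunctional_mul_neg_pow (b := b) ha
    (two_mul_add_mul_gaussMoment_succ ha)
    (by rw [gaussMoment_zero, gaussMoment_one (by simpa using ha 0)])
    (norm_lt_one_of_two_mul_norm_lt hregion)
  rw [gaussMoment_zero] at heven
  exact heuler.unique heven

theorem analyticOnNhd_gauss_quadratic_left (a b c : ℂ) :
    AnalyticOnNhd ℂ (fun z => (1 + z) ^ (-b) * (₂F₁ a b c (2 * z / (1 + z)) +
      ₂F₁ (a + 1) b c (2 * z / (1 + z)))) {z : ℂ | 2 * ‖z‖ < ‖1 + z‖} := by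
  intro z hz
  have hslit := one_add_mem_slitPlane_of_two_mul_norm_lt hz
  have hz0 : 1 + z ≠ 0 := Complex.slitPlane_ne_zero hslit
  have hF (α : ℂ) : AnalyticAt ℂ (fun z => ₂F₁ α b c (2 * z / (1 + z))) z :=
    analyticAt_ordinaryHypergeometric_comp α b c (by fun_prop (disch := assumption))
      (norm_two_mul_div_one_add_lt_one hz)
  exact .fun_mul (.cpow (by fun_prop) (by fun_prop) hslit) (.fun_add (hF a) (hF (a + 1)))

theorem analyticOnNhd_gauss_quadratic_right (a b c : ℂ) :
    AnalyticOnNhd ℂ (fun z => 2 * ₂F₁ a b c (z ^ 2)) {z : ℂ | 2 * ‖z‖ < ‖1 + z‖} := fun _ hz =>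
  .fun_mul (by fun_prop) <| analyticAt_ordinaryHypergeometric_comp a b c (by fun_prop)
    (norm_sq_lt_one_of_two_mul_norm_lt hz)

theorem ordinaryHypergeometric_add_gauss_quadratic {a : ℂ}
    (ha : ∀ n : ℕ, 2 * a + 1 ≠ -n) (b : ℂ) {z : ℂ} (hz : 2 * ‖z‖ < ‖1 + z‖) :
    (1 + z) ^ (-b) * (₂F₁ a b (2 * a + 1) (2 * z / (1 + z)) +
        ₂F₁ (a + 1) b (2 * a + 1) (2 * z / (1 + z))) =
      2 * ₂F₁ (b / 2) ((b + 1) / 2) (a + 1 / 2) (z ^ 2) := by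
  refine (analyticOnNhd_gauss_quadratic_left a b (2 * a + 1)).eqOn_of_preconnected_of_eventuallyEq
    (analyticOnNhd_gauss_quadratic_right _ _ _) isPreconnected_setOf_two_mul_norm_lt
    (z₀ := 0) (by simp) ?_ hz
  filter_upwards [Metric.ball_mem_nhds (0 : ℂ) (by norm_num : (0 : ℝ) < 1 / 5)] with y hy
  exact ordinaryHypergeometric_add_gauss_quadratic_of_norm_lt ha b (mem_ball_zero_iff.1 hy)

theorem ordinaryHypergeometric_gauss_quadratic {α : ℂ} (hα : ∀ n : ℕ, 2 * α ≠ -n) (β : ℂ) {z : ℂ}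
    (hz : 2 * ‖z‖ < ‖1 + z‖) :
    (1 + z) ^ (-β) * ₂F₁ α β (2 * α) (2 * z / (1 + z)) =
      ₂F₁ (β / 2) ((β + 1) / 2) (α + 1 / 2) (z ^ 2) := by
  have hα0 : α ≠ 0 := by simpa using hα 0
  have hcontig := ordinaryHypergeometric_add_one_right α β hα (norm_two_mul_div_one_add_lt_one hz)
  have hgauss := ordinaryHypergeometric_add_gauss_quadratic (a := α)
    (fun n h => hα (n + 1) (by push_cast; linear_combination h)) β hz
  refine mul_left_cancel₀ (mul_ne_zero two_ne_zero hα0) ?_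
  linear_combination α * hgauss - (1 + z) ^ (-β) * hcontig

theorem ordinaryHypergeometric_add_one_gauss_quadratic {a : ℂ}
    (ha : ∀ n : ℕ, 2 * a + 1 ≠ -n) (b : ℂ) {z : ℂ} (hz : 2 * ‖z‖ < ‖1 + z‖) :
    (1 + z) ^ (-b) * (2 * z / (1 + z) * ₂F₁ (a + 1) (b + 1) (2 * a + 1 + 1) (2 * z / (1 + z))) =
      2 * z * ₂F₁ ((b + 1) / 2) (b / 2 + 1) (a + 3 / 2) (z ^ 2) := by
  have h := ordinaryHypergeometric_gauss_quadratic (α := a + 1)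
    (fun n h => ha (n + 1) (by push_cast; linear_combination h)) (b + 1) hz
  have hz0 : 1 + z ≠ 0 := Complex.slitPlane_ne_zero (one_add_mem_slitPlane_of_two_mul_norm_lt hz)
  rw [neg_add, ← sub_eq_add_neg, Complex.cpow_sub _ _ hz0, Complex.cpow_one] at h
  ring_nf at h ⊢
  linear_combination 2 * z * h

end Gauss

theorem tsum_poch_eq_ordinaryHypergeometric (a b c : ℂ) {x : ℂ} (hx : ‖x‖ < 1) :
    ∑' k : ℕ, poch a k * poch b k * x ^ k / (poch c k * (Nat.factorial k : ℂ)) = ₂F₁ a b c x := by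
  rw [← (hasSum_ordinaryHypergeometric a b c hx).tsum_eq]
  refine tsum_congr fun k => ?_
  simp only [poch, ordinaryHypergeometricCoefficient]
  ring

theorem example_binomial_general (z : ℂ) (hz : 2 * ‖z‖ < ‖1 + z‖) (a b d : ℂ)
    (h2a1 : ∀ n : ℕ, 2 * a + 1 ≠ -(n : ℂ)) (hd : ∀ n : ℕ, d ≠ -(n : ℂ)) :
    (1 + z) ^ (-b) *
        ∑' k : ℕ, poch a k * poch b k * poch (d + 1) k * (2 * z / (1 + z)) ^ k /
          (poch (2 * a + 1) k * poch d k * (Nat.factorial k : ℂ))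
      = (∑' k : ℕ, poch (b / 2) k * poch ((b + 1) / 2) k * (z ^ 2) ^ k /
            (poch (a + 1 / 2) k * (Nat.factorial k : ℂ)))
        - ((1 - 2 * a / d) * b / (2 * a + 1)) * z *
          ∑' k : ℕ, poch ((b + 1) / 2) k * poch (b / 2 + 1) k * (z ^ 2) ^ k /
            (poch (a + 3 / 2) k * (Nat.factorial k : ℂ)) := by
  have hw := norm_two_mul_div_one_add_lt_one hz
  have hz2 := norm_sq_lt_one_of_two_mul_norm_lt hz
  have hthreeTwo := (hasSum_three_two_hypergeometric_add_one a b (2 * a + 1) hd hw).tsum_eq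
  have hcontig := ordinaryHypergeometric_add_one_left a b (2 * a + 1) hw
  have heven := ordinaryHypergeometric_add_gauss_quadratic h2a1 b hz
  have hodd := ordinaryHypergeometric_add_one_gauss_quadratic h2a1 b hz
  rw [hcontig] at heven
  rw [tsum_poch_eq_ordinaryHypergeometric _ _ _ hz2, tsum_poch_eq_ordinaryHypergeometric _ _ _ hz2]
  simp only [poch]
  rw [hthreeTwo]
  linear_combination heven / 2 + (a * b / (2 * a + 1) / d - b / (2 * a + 1) / 2) * hodd

/-- Example (c) of the paper: for `0 < z < 1`,
`(1+z)^{-b} ₃F₂(a, b, d+1; 2a+1, d; 2z/(1+z))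
  = ₂F₁(b/2, (b+1)/2; a+1/2; z²) - ((1-2a/d)b/(2a+1)) z ₂F₁((b+1)/2, b/2+1; a+3/2; z²)`. -/
theorem example_binomial
    (z : ℝ) (hz0 : 0 < z) (hz1 : z < 1)
    (a b d : ℂ)
    (h2a1 : ∀ n : ℕ, 2 * a + 1 ≠ -(n : ℂ))
    (hd : ∀ n : ℕ, d ≠ -(n : ℂ))
    (ha1 : ∀ n : ℕ, a + 1 / 2 ≠ -(n : ℂ))
    (ha3 : ∀ n : ℕ, a + 3 / 2 ≠ -(n : ℂ))
    (hconv : (2 * a + 1 + d - a - b - (d + 1)).re > 0) :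
    ((1 : ℂ) + (z : ℂ)) ^ (-b) *
        ∑' k : ℕ, poch a k * poch b k * poch (d + 1) k *
          (2 * (z : ℂ) / (1 + (z : ℂ))) ^ k /
          (poch (2 * a + 1) k * poch d k * (Nat.factorial k : ℂ))
      = (∑' k : ℕ, poch (b / 2) k * poch ((b + 1) / 2) k * ((z : ℂ) ^ 2) ^ k /
            (poch (a + 1 / 2) k * (Nat.factorial k : ℂ)))
        - ((1 - 2 * a / d) * b / (2 * a + 1)) * (z : ℂ) *
          ∑' k : ℕ, poch ((b + 1) / 2) k * poch (b / 2 + 1) k * ((z : ℂ) ^ 2) ^ k /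
            (poch (a + 3 / 2) k * (Nat.factorial k : ℂ)) := by
  refine example_binomial_general z ?_ a b d h2a1 hd
  rw [← Complex.ofReal_one, ← Complex.ofReal_add, Complex.norm_of_nonneg hz0.le,
    Complex.norm_of_nonneg (by positivity)]
  linarith
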